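/- Suppose that p = p(n) satisfies log(n)/n ≪ p ≤ 1/log² n, and let 0 < C₁ < C₂ < 1 be constants. Then for each fixed vertex v of G(n,p), asymptotically almost surely pt_pzf(G(n,p), v) ≥ (C₂ − C₁) log₄(1/p). -/

import Mathlib

open Finset Filter Real
open scoped Classical

namespace PZF

variable {V : Type*} [Fintype V] [DecidableEq V]

/-- The closed degree of `u` into the set `B`, i.e. `|N[u] ∩ B|`. -/
noncomputable def closedDegIn (G : SimpleGraph V) (B : Finset V) (u : V) : ℕ :=
  ((insert u (G.neighborSet u)) ∩ (B : Set V)).ncard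

/-- The degree of `u` in `G`. -/
noncomputable def deg (G : SimpleGraph V) (u : V) : ℕ :=
  (G.neighborSet u).ncard

/-- The probability that the blue vertex `u` forces its white neighbour `v` in one round of
probabilistic zero forcing, when the current blue set is `B`: it equals `|N[u] ∩ B| / deg u`
when `u` is blue, `v` is a white neighbour of `u`, and `0` otherwise. -/
noncomputable def edgeForceProb (G : SimpleGraph V) (B : Finset V) (u v : V) : ℝ :=
  if G.Adj u v ∧ u ∈ B ∧ v ∉ B then (closedDegIn G B u : ℝ) / (deg G u : ℝ) else 0

/-- Given per-ordered-pair forcing probabilities `q u v` (each attempt independent), the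
probability that one round starting from the blue set `B` produces exactly the blue set `B'`. -/
noncomputable def stepOfQ (q : V → V → ℝ) (B B' : Finset V) : ℝ :=
  if B ⊆ B' then
    (∏ v ∈ B' \ B, (1 - ∏ u ∈ B, (1 - q u v))) * ∏ v ∈ B'ᶜ, ∏ u ∈ B, (1 - q u v)
  else 0

/-- The transition rule of standard probabilistic zero forcing, as a function of the history
(the list of blue sets so far; only the current blue set matters). -/
noncomputable def stdStep (G : SimpleGraph V) (hist : List (Finset V)) (B' : Finset V) : ℝ :=
  stepOfQ (edgeForceProb G (hist.getLastD ∅)) (hist.getLastD ∅) B'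

/-- Probability of a given future trajectory, given the history so far. -/
noncomputable def seqProbAux (step : List (Finset V) → Finset V → ℝ) :
    List (Finset V) → List (Finset V) → ℝ
  | _, [] => 1
  | hist, B :: rest => step hist B * seqProbAux step (hist ++ [B]) rest

/-- The probability that, running the process given by the transition rule `step` from the
initial blue set `S` for `ℓ` rounds, the resulting trajectory (including the initial set)
satisfies the predicate `E`. -/
noncomputable def trajEventProb (step : List (Finset V) → Finset V → ℝ) (S : Finset V)
    (ℓ : ℕ) (E : List (Finset V) → Prop) : ℝ :=
  ∑ f : Fin ℓ → Finset V,
    if E (S :: List.ofFn f) then seqProbAux step [S] (List.ofFn f) else 0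

/-- `P(A(S,T,ℓ))`: the probability that, starting probabilistic zero forcing from the blue
set `S`, after `ℓ` rounds every vertex of `T` is blue. -/
noncomputable def probForced (G : SimpleGraph V) (S T : Finset V) (ℓ : ℕ) : ℝ :=
  trajEventProb (stdStep G) S ℓ fun traj => T ⊆ traj.getLastD ∅

/-- `P(pt_pzf(G,S) ≤ ℓ)`: the probability that all vertices are blue after `ℓ` rounds. -/
noncomputable def probAllBlue (G : SimpleGraph V) (S : Finset V) (ℓ : ℕ) : ℝ :=
  probForced G S Finset.univ ℓ

/-- The probability of a fixed graph `G` under the Erdős–Rényi measure `G(n,p)`. -/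
noncomputable def erProb (n : ℕ) (p : ℝ) (G : SimpleGraph (Fin n)) : ℝ :=
  p ^ G.edgeSet.ncard * (1 - p) ^ (n.choose 2 - G.edgeSet.ncard)

/-- The probability that `G(n,p)` satisfies the property `E`. -/
noncomputable def graphProb (n : ℕ) (p : ℝ) (E : SimpleGraph (Fin n) → Prop) : ℝ :=
  ∑ G : SimpleGraph (Fin n), if E G then erProb n p G else 0

/-- `P(pt_pzf(G(n,p), v) ≤ ℓ)`: the joint probability (over the random graph and the forcing
randomness) that probabilistic zero forcing started at `{v}` turns all of `G(n,p)` blue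
within `ℓ` rounds. -/
noncomputable def prPZFwithin (n : ℕ) (p : ℝ) (v : Fin n) (ℓ : ℕ) : ℝ :=
  ∑ G : SimpleGraph (Fin n), erProb n p G * probAllBlue G {v} ℓ

end PZF

/-!
Reveal the edges of the random graph only as they come to lie inside the blue set. The step
probabilities depend on the edges still unrevealed only through a product over them, so
conditioning on the history merely lowers the probability of each such edge. Let `X` be the sum of
`|N[u] ∩ B|` over the vertices `u` of the blue set `B`, and pretend that every degree equals its
typical value `np`. As long as `X` is much smaller than `1 / p`, one round turns `X` into at most
`(4 + o(1)) X` on average: the old pairs survive, each forced vertex is paired with itself and,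
in both orders, with its forcer, and this adds about `3X`, all other new pairs being negligible.
For `C < C' < 1`, the `C log₄ (1 / p)` rounds therefore bring `X` from `1` to less than `p ^ (-C')`
with high probability, while an entirely blue graph has `X ≥ n ≥ p ^ (-C')`.
-/

namespace PZF

section RandomSubset

variable {α : Type*} [DecidableEq α] {T : Finset α} {r : α → ℝ} {f g : Finset α → ℝ}

/-- The expectation of `f S` for the random subset `S` of `T` that contains each `a ∈ T`
independently with probability `r a`. -/
noncomputable def subsetExp (T : Finset α) (r : α → ℝ) (f : Finset α → ℝ) : ℝ :=
  ∑ S ∈ T.powerset, (∏ a ∈ S, r a) * (∏ a ∈ T \ S, (1 - r a)) * f S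

lemma subsetExp_empty (r : α → ℝ) (f : Finset α → ℝ) : subsetExp ∅ r f = f ∅ := by
  simp [subsetExp]

lemma subsetExp_insert {a : α} (ha : a ∉ T) (r : α → ℝ) (f : Finset α → ℝ) :
    subsetExp (insert a T) r f =
      r a * subsetExp T r (fun S => f (insert a S)) + (1 - r a) * subsetExp T r f := by
  unfold subsetExp
  rw [sum_powerset_insert ha, add_comm, mul_sum, mul_sum]
  congr 1 <;> refine sum_congr rfl fun S hS => ?_
  all_goals have haS : a ∉ S := fun h => ha (mem_powerset.1 hS h)
  · rw [prod_insert haS, insert_sdiff_insert, sdiff_insert_of_notMem ha]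
    ring
  · rw [insert_sdiff_of_notMem _ haS, prod_insert (by simp [ha])]
    ring

lemma subsetExp_congr (h : ∀ S ⊆ T, f S = g S) : subsetExp T r f = subsetExp T r g :=
  sum_congr rfl fun S hS => by rw [h S (mem_powerset.1 hS)]

lemma subsetExp_mono (hr : ∀ a, r a ∈ unitInterval) (h : ∀ S ⊆ T, f S ≤ g S) :
    subsetExp T r f ≤ subsetExp T r g :=
  sum_le_sum fun S hS => mul_le_mul_of_nonneg_left (h S (mem_powerset.1 hS)) <|
    mul_nonneg (prod_nonneg fun a _ => (hr a).1)
      (prod_nonneg fun a _ => sub_nonneg.2 (hr a).2)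

lemma subsetExp_const_mul (T : Finset α) (r : α → ℝ) (c : ℝ) (f : Finset α → ℝ) :
    subsetExp T r (fun S => c * f S) = c * subsetExp T r f := by
  simp only [subsetExp, mul_sum, mul_left_comm]

lemma subsetExp_add (T : Finset α) (r : α → ℝ) (f g : Finset α → ℝ) :
    subsetExp T r (fun S => f S + g S) = subsetExp T r f + subsetExp T r g := by
  simp only [subsetExp, mul_add, sum_add_distrib]

lemma subsetExp_sub (T : Finset α) (r : α → ℝ) (f g : Finset α → ℝ) :
    subsetExp T r (fun S => f S - g S) = subsetExp T r f - subsetExp T r g := by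
  simp only [subsetExp, mul_sub, sum_sub_distrib]

lemma subsetExp_sum {ι : Type*} (I : Finset ι) (T : Finset α) (r : α → ℝ)
    (f : ι → Finset α → ℝ) :
    subsetExp T r (fun S => ∑ i ∈ I, f i S) = ∑ i ∈ I, subsetExp T r (f i) := by
  simp only [subsetExp, mul_sum]
  exact sum_comm

lemma subsetExp_prod (T : Finset α) (r x : α → ℝ) :
    subsetExp T r (fun S => ∏ a ∈ S, x a) = ∏ a ∈ T, (1 - r a * (1 - x a)) := by
  calc subsetExp T r (fun S => ∏ a ∈ S, x a)
      = ∑ S ∈ T.powerset, (∏ a ∈ S, r a * x a) * ∏ a ∈ T \ S, (1 - r a) := by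
        simp only [subsetExp, prod_mul_distrib, mul_right_comm]
    _ = ∏ a ∈ T, (r a * x a + (1 - r a)) := (prod_add _ _ T).symm
    _ = ∏ a ∈ T, (1 - r a * (1 - x a)) := prod_congr rfl fun a _ => by ring

lemma subsetExp_const (T : Finset α) (r : α → ℝ) (c : ℝ) : subsetExp T r (fun _ => c) = c := by
  have total_mass : subsetExp T r (fun _ => 1) = 1 := by
    simpa using subsetExp_prod T r fun _ => 1
  simpa [total_mass] using subsetExp_const_mul T r c fun _ => 1

lemma subsetExp_nonneg (hr : ∀ a, r a ∈ unitInterval) (h : ∀ S ⊆ T, 0 ≤ f S) :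
    0 ≤ subsetExp T r f :=
  (subsetExp_const T r 0).symm.le.trans (subsetExp_mono hr h)

lemma subsetExp_le_of_le {c : ℝ} (hr : ∀ a, r a ∈ unitInterval) (h : ∀ S ⊆ T, f S ≤ c) :
    subsetExp T r f ≤ c :=
  (subsetExp_mono hr h).trans (subsetExp_const T r c).le

lemma subsetExp_mono_weight {r' : α → ℝ} (hr : ∀ a, r a ∈ unitInterval)
    (hr' : ∀ a, r' a ∈ unitInterval) (hrr' : ∀ a, r a ≤ r' a) (hf : Monotone f) :
    subsetExp T r f ≤ subsetExp T r' f := by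
  induction T using Finset.induction_on generalizing f with
  | empty => simp only [subsetExp_empty, le_refl]
  | insert a T ha ih =>
    rw [subsetExp_insert ha, subsetExp_insert ha]
    have ih_without := ih hf
    have ih_with := ih (f := fun S => f (insert a S))
      fun S S' h => hf (insert_subset_insert a h)
    have with_ge : subsetExp T r' f ≤ subsetExp T r' (fun S => f (insert a S)) :=
      subsetExp_mono hr' fun S _ => hf (subset_insert a S)
    calc r a * subsetExp T r (fun S => f (insert a S)) + (1 - r a) * subsetExp T r f
        ≤ r a * subsetExp T r' (fun S => f (insert a S)) + (1 - r a) * subsetExp T r' f := by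
          gcongr
          exacts [(hr a).1, sub_nonneg.2 (hr a).2]
      _ ≤ r' a * subsetExp T r' (fun S => f (insert a S)) + (1 - r' a) * subsetExp T r' f := by
          linarith [mul_le_mul_of_nonneg_right (hrr' a) (sub_nonneg.2 with_ge)]

lemma subsetExp_union {T₁ T₂ : Finset α} (h : Disjoint T₁ T₂) (r : α → ℝ)
    (f : Finset α → ℝ) :
    subsetExp (T₁ ∪ T₂) r f =
      subsetExp T₁ r fun S₁ => subsetExp T₂ r fun S₂ => f (S₁ ∪ S₂) := by
  induction T₁ using Finset.induction_on generalizing f with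
  | empty => simp only [empty_union, subsetExp_empty]
  | insert a T ha ih =>
    rw [disjoint_insert_left] at h
    rw [insert_union, subsetExp_insert (by simp [ha, h.1]), subsetExp_insert ha, ih h.2, ih h.2]
    simp only [insert_union]

lemma subsetExp_prod_mul {x : α → ℝ} (h : ∀ a, 1 - r a * (1 - x a) ≠ 0) (g : Finset α → ℝ) :
    subsetExp T r (fun S => (∏ a ∈ S, x a) * g S) =
      (∏ a ∈ T, (1 - r a * (1 - x a))) *
        subsetExp T (fun a => r a * x a / (1 - r a * (1 - x a))) g := by
  unfold subsetExp
  rw [mul_sum]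
  refine sum_congr rfl fun S hS => ?_
  have compl_weight : ∏ a ∈ T \ S, (1 - r a * x a / (1 - r a * (1 - x a))) =
      (∏ a ∈ T \ S, (1 - r a)) / ∏ a ∈ T \ S, (1 - r a * (1 - x a)) := by
    rw [← prod_div_distrib]
    refine prod_congr rfl fun a _ => ?_
    rw [one_sub_div (h a)]
    congr 1
    ring
  have hS₀ : ∏ a ∈ S, (1 - r a * (1 - x a)) ≠ 0 := prod_ne_zero_iff.2 fun a _ => h a
  have hTS₀ : ∏ a ∈ T \ S, (1 - r a * (1 - x a)) ≠ 0 := prod_ne_zero_iff.2 fun a _ => h a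
  rw [compl_weight, prod_div_distrib, prod_mul_distrib, ← prod_sdiff (mem_powerset.1 hS)]
  field_simp

/- Conditioning a product measure on an event of product form only lowers the weights, so it
suffices to control the mean of `g` for all smaller weights. -/
lemma subsetExp_prod_mul_nonneg {x : α → ℝ} (hr : ∀ a, r a ∈ Set.Ico 0 1)
    (hx : ∀ a, x a ∈ unitInterval)
    (hg : ∀ r' : α → ℝ, (∀ a, r' a ∈ Set.Icc 0 (r a)) → 0 ≤ subsetExp T r' g) :
    0 ≤ subsetExp T r fun S => (∏ a ∈ S, x a) * g S := by
  have mass_pos (a : α) : 0 < 1 - r a * (1 - x a) := by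
    linarith [(hr a).2, mul_nonneg (hr a).1 (hx a).1]
  rw [subsetExp_prod_mul fun a => (mass_pos a).ne']
  refine mul_nonneg (prod_nonneg fun a _ => (mass_pos a).le) (hg _ fun a => ⟨?_, ?_⟩)
  · exact div_nonneg (mul_nonneg (hr a).1 (hx a).1) (mass_pos a).le
  · rw [div_le_iff₀ (mass_pos a)]
    refine mul_le_mul_of_nonneg_left ?_ (hr a).1
    linarith [mul_le_of_le_one_left (sub_nonneg.2 (hx a).2) (hr a).2.le]

lemma subsetExp_superset_le (hr : ∀ a, r a ∈ unitInterval) (D : Finset α) :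
    subsetExp T r (fun S => if D ⊆ S then 1 else 0) ≤ ∏ a ∈ D, r a := by
  by_cases hD : D ⊆ T
  · rw [← union_sdiff_of_subset hD, subsetExp_union disjoint_sdiff]
    have indicator_eq : ∀ S₁ ⊆ D, subsetExp (T \ D) r (fun S₂ => if D ⊆ S₁ ∪ S₂ then 1 else 0) =
        if S₁ = D then 1 else 0 := fun S₁ hS₁ => by
      rw [← subsetExp_const (T \ D) r (if S₁ = D then 1 else 0)]
      refine subsetExp_congr fun S₂ hS₂ => if_congr ?_ rfl rfl
      have hDS₂ : Disjoint D S₂ := disjoint_sdiff.mono_right hS₂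
      exact ⟨fun h => hS₁.antisymm (hDS₂.left_le_of_le_sup_right h),
        fun h => h ▸ subset_union_left⟩
    rw [subsetExp_congr indicator_eq]
    simp [subsetExp]
  · rw [subsetExp_congr (g := fun _ => 0) fun S hS => if_neg fun h => hD (h.trans hS),
      subsetExp_const]
    exact prod_nonneg fun a _ => (hr a).1

lemma subsetExp_le_sum_mul_pow_card {ι : Type*} {I : Finset ι} {c : ι → ℝ} {D : ι → Finset α}
    {p : ℝ} (hr : ∀ a, r a ∈ Set.Icc 0 p) (hp : p ≤ 1) (hc : ∀ i ∈ I, 0 ≤ c i)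
    (hf : ∀ S ⊆ T, f S ≤ ∑ i ∈ I, c i * if D i ⊆ S then 1 else 0) :
    subsetExp T r f ≤ ∑ i ∈ I, c i * p ^ #(D i) := by
  have hr' (a : α) : r a ∈ unitInterval := ⟨(hr a).1, (hr a).2.trans hp⟩
  refine (subsetExp_mono hr' hf).trans ?_
  rw [subsetExp_sum]
  refine sum_le_sum fun i hi => ?_
  rw [subsetExp_const_mul]
  refine mul_le_mul_of_nonneg_left ((subsetExp_superset_le hr' (D i)).trans ?_) (hc i hi)
  exact (prod_le_prod (fun a _ => (hr a).1) fun a _ => (hr a).2).trans (prod_const p).le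

lemma exp_neg_le_one_sub_add_sq {x : ℝ} (hx : 0 ≤ x) : exp (-x) ≤ 1 - x + x ^ 2 / 2 := by
  have pos : 0 ≤ 1 - x + x ^ 2 / 2 := by nlinarith [sq_nonneg (1 - x)]
  rw [exp_neg, inv_le_iff_one_le_mul₀ (exp_pos x)]
  calc 1 ≤ (1 - x + x ^ 2 / 2) * (1 + x + x ^ 2 / 2) := by nlinarith [sq_nonneg (x ^ 2)]
    _ ≤ (1 - x + x ^ 2 / 2) * exp x :=
        mul_le_mul_of_nonneg_left (quadratic_le_exp_of_nonneg hx) pos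

lemma subsetExp_exp_neg_card_filter_le (hr : ∀ a, r a ∈ unitInterval) (P : α → Prop)
    [DecidablePred P] {δ : ℝ} (hδ : 0 ≤ δ) :
    subsetExp T r (fun S => exp (-(δ * #{a ∈ S | P a}))) ≤
      exp (-((δ - δ ^ 2 / 2) * ∑ a ∈ T with P a, r a)) := by
  have exp_eq_prod (S : Finset α) :
      exp (-(δ * #{a ∈ S | P a})) = ∏ a ∈ S, if P a then exp (-δ) else 1 := by
    rw [← prod_filter, prod_const, ← exp_nat_mul]
    ring_nf
  simp only [exp_eq_prod, subsetExp_prod]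
  rw [mul_sum, ← sum_neg_distrib, exp_sum, prod_filter]
  have exp_le_one : exp (-δ) ≤ 1 := exp_le_one_iff.2 (neg_nonpos.2 hδ)
  refine prod_le_prod (fun a _ => ?_) fun a _ => ?_ <;> split_ifs
  · nlinarith [mul_le_one₀ (hr a).2 (sub_nonneg.2 exp_le_one) (by linarith [exp_pos (-δ)])]
  · simp
  · calc 1 - r a * (1 - exp (-δ)) ≤ 1 - (δ - δ ^ 2 / 2) * r a := by
          nlinarith [mul_le_mul_of_nonneg_left (exp_neg_le_one_sub_add_sq hδ) (hr a).1]
      _ ≤ exp (-((δ - δ ^ 2 / 2) * r a)) := one_sub_le_exp_neg _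
  · simp

lemma subsetExp_card_filter_lt_le (hr : ∀ a, r a ∈ unitInterval) (P : α → Prop)
    [DecidablePred P] {δ : ℝ} (hδ : 0 ≤ δ) :
    subsetExp T r
        (fun S => if (#{a ∈ S | P a} : ℝ) < (1 - δ) * ∑ a ∈ T with P a, r a then 1 else 0) ≤
      exp (-(δ ^ 2 / 2 * ∑ a ∈ T with P a, r a)) := by
  set μ := ∑ a ∈ T with P a, r a
  calc subsetExp T r (fun S => if (#{a ∈ S | P a} : ℝ) < (1 - δ) * μ then 1 else 0)
      ≤ subsetExp T r
          (fun S => exp (δ * ((1 - δ) * μ)) * exp (-(δ * #{a ∈ S | P a}))) := by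
        refine subsetExp_mono hr fun S _ => ?_
        rw [← exp_add]
        split_ifs with h
        · rw [one_le_exp_iff]
          linarith [mul_le_mul_of_nonneg_left h.le hδ]
        · positivity
    _ ≤ exp (δ * ((1 - δ) * μ)) * exp (-((δ - δ ^ 2 / 2) * μ)) := by
        rw [subsetExp_const_mul]
        exact mul_le_mul_of_nonneg_left (subsetExp_exp_neg_card_filter_le hr P hδ) (exp_pos _).le
    _ = exp (-(δ ^ 2 / 2 * μ)) := by
        rw [← exp_add]
        ring_nf

end RandomSubset

section ForcingProcess

variable {V : Type*} [DecidableEq V] {q q' : V → V → ℝ} {B B' : Finset V} {w : V}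

/-- The probability that `w` is blue after one round from the blue set `B`, when each `u ∈ B`
independently forces each `v ∉ B` with probability `q u v`. -/
noncomputable def blueProb (q : V → V → ℝ) (B : Finset V) (w : V) : ℝ :=
  if w ∈ B then 1 else 1 - ∏ u ∈ B, (1 - q u w)

lemma blueProb_of_mem (hw : w ∈ B) : blueProb q B w = 1 := if_pos hw

lemma blueProb_of_notMem (hw : w ∉ B) : blueProb q B w = 1 - ∏ u ∈ B, (1 - q u w) := if_neg hw

lemma blueProb_mem_unitInterval (hq : ∀ u v, q u v ∈ unitInterval) (B : Finset V) (w : V) :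
    blueProb q B w ∈ unitInterval := by
  by_cases hw : w ∈ B
  · exact blueProb_of_mem (q := q) hw ▸ unitInterval.one_mem
  · rw [blueProb_of_notMem hw, ← Set.Icc.mem_iff_one_sub_mem]
    exact unitInterval.prod_mem fun u _ => Set.Icc.mem_iff_one_sub_mem.1 (hq u w)

lemma blueProb_mono (hq : ∀ u v, q u v ∈ unitInterval) (hq' : ∀ u v, q' u v ∈ unitInterval)
    (hqq' : q ≤ q') (hB : B ⊆ B') (w : V) : blueProb q B w ≤ blueProb q' B' w := by
  by_cases hw : w ∈ B'
  · rw [blueProb_of_mem (q := q') hw]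
    exact (blueProb_mem_unitInterval hq B w).2
  rw [blueProb_of_notMem hw, blueProb_of_notMem fun h => hw (hB h)]
  refine sub_le_sub_left ?_ 1
  calc ∏ u ∈ B', (1 - q' u w) ≤ ∏ u ∈ B, (1 - q' u w) :=
        prod_le_prod_of_subset_of_le_one hB (fun u _ => sub_nonneg.2 (hq' u w).2)
          fun u _ _ => sub_le_self _ (hq' u w).1
    _ ≤ ∏ u ∈ B, (1 - q u w) :=
        prod_le_prod (fun u _ => sub_nonneg.2 (hq' u w).2) fun u _ => sub_le_sub_left (hqq' u w) 1

lemma one_sub_prod_one_sub_le_sum {ι : Type*} {I : Finset ι} {a : ι → ℝ}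
    (ha : ∀ i ∈ I, a i ∈ unitInterval) : 1 - ∏ i ∈ I, (1 - a i) ≤ ∑ i ∈ I, a i := by
  induction I using Finset.cons_induction with
  | empty => simp
  | cons i I hi ih =>
    rw [forall_mem_cons] at ha
    rw [prod_cons, sum_cons]
    have prod_le_one : ∏ j ∈ I, (1 - a j) ≤ 1 :=
      (unitInterval.prod_mem fun j hj => Set.Icc.mem_iff_one_sub_mem.1 (ha.2 j hj)).2
    linarith [ih ha.2, mul_le_of_le_one_right ha.1.1 prod_le_one]

lemma blueProb_le_sum (hq : ∀ u v, q u v ∈ unitInterval) (hw : w ∉ B) :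
    blueProb q B w ≤ ∑ u ∈ B, q u w :=
  (blueProb_of_notMem hw).trans_le <| one_sub_prod_one_sub_le_sum fun u _ => hq u w

variable [Fintype V]

lemma stepOfQ_of_not_subset (q : V → V → ℝ) (h : ¬B ⊆ B') : stepOfQ q B B' = 0 := if_neg h

lemma stepOfQ_eq_prod_blueProb (q : V → V → ℝ) (B B' : Finset V) :
    stepOfQ q B B' = (∏ w ∈ B', blueProb q B w) * ∏ w ∈ univ \ B', (1 - blueProb q B w) := by
  by_cases h : B ⊆ B'
  · rw [stepOfQ, if_pos h, ← prod_sdiff h, prod_eq_one fun w hw => blueProb_of_mem hw, mul_one,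
      compl_eq_univ_sdiff]
    congr 1 <;> refine prod_congr rfl fun w hw => ?_
    · rw [blueProb_of_notMem (mem_sdiff.1 hw).2]
    · rw [blueProb_of_notMem fun hwB => (mem_sdiff.1 hw).2 (h hwB), sub_sub_cancel]
  · obtain ⟨b, hb, hb'⟩ := not_subset.1 h
    rw [stepOfQ_of_not_subset q h, prod_eq_zero (i := b) (s := univ \ B') (by simpa using hb')
      (by rw [blueProb_of_mem hb, sub_self]), mul_zero]

lemma subsetExp_blueProb (q : V → V → ℝ) (B : Finset V) (f : Finset V → ℝ) :
    subsetExp univ (blueProb q B) f = ∑ B', stepOfQ q B B' * f B' := by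
  simp only [subsetExp, powerset_univ, stepOfQ_eq_prod_blueProb]

/-- The probability that every vertex is blue after `ℓ` rounds from the blue set `B`, for the
forcing process in which `u` forces `v` with probability `q B u v` when the blue set is `B`. -/
noncomputable def finishProb (q : Finset V → V → V → ℝ) : ℕ → Finset V → ℝ
  | 0, B => if B = univ then 1 else 0
  | ℓ + 1, B => subsetExp univ (blueProb (q B) B) (finishProb q ℓ)

section finishProb

variable {q q' : Finset V → V → V → ℝ}

lemma finishProb_mem_unitInterval (hq : ∀ B u v, q B u v ∈ unitInterval) (ℓ : ℕ)
    (B : Finset V) : finishProb q ℓ B ∈ unitInterval := by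
  induction ℓ generalizing B with
  | zero => unfold finishProb; split_ifs <;> simp
  | succ ℓ ih =>
    have hr := blueProb_mem_unitInterval (hq B) B
    exact ⟨subsetExp_nonneg hr fun S _ => (ih S).1, subsetExp_le_of_le hr fun S _ => (ih S).2⟩

lemma monotone_finishProb (hq : ∀ B u v, q B u v ∈ unitInterval) (hmono : Monotone q) (ℓ : ℕ) :
    Monotone (finishProb q ℓ) := by
  induction ℓ with
  | zero =>
    intro B B' h
    by_cases hB : B = univ
    · have hB' : B' = univ := univ_subset_iff.1 (hB ▸ h)
      rw [hB, hB']
    · simp only [finishProb, hB, if_false]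
      split_ifs <;> simp
  | succ ℓ ih =>
    intro B B' h
    exact subsetExp_mono_weight (blueProb_mem_unitInterval (hq B) B)
      (blueProb_mem_unitInterval (hq B') B') (blueProb_mono (hq B) (hq B') (hmono h) h) ih

lemma finishProb_le_finishProb (hq : ∀ B u v, q B u v ∈ unitInterval)
    (hq' : ∀ B u v, q' B u v ∈ unitInterval) (hqq' : q ≤ q') (hmono : Monotone q') (ℓ : ℕ)
    (B : Finset V) : finishProb q ℓ B ≤ finishProb q' ℓ B := by
  induction ℓ generalizing B with
  | zero => exact le_rfl
  | succ ℓ ih =>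
    have hr := blueProb_mem_unitInterval (hq B) B
    exact (subsetExp_mono hr fun S _ => ih S).trans <|
      subsetExp_mono_weight hr (blueProb_mem_unitInterval (hq' B) B)
        (blueProb_mono (hq B) (hq' B) (hqq' B) subset_rfl) (monotone_finishProb hq' hmono ℓ)

end finishProb

end ForcingProcess

section StandardProcess

variable {V : Type*}

lemma closedDegIn_le_deg [Finite V] {G : SimpleGraph V} {B : Finset V} {u v : V}
    (h : G.Adj u v) (hv : v ∉ B) : closedDegIn G B u ≤ deg G u := by
  have inter_subset : insert u (G.neighborSet u) ∩ (B : Set V) ⊆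
      insert u (G.neighborSet u \ {v}) := by
    rintro x ⟨rfl | hx, hxB⟩
    · exact Or.inl rfl
    · exact Or.inr ⟨hx, fun hxv => hv (hxv ▸ hxB)⟩
  calc closedDegIn G B u ≤ (insert u (G.neighborSet u \ {v})).ncard :=
        Set.ncard_le_ncard inter_subset (Set.toFinite _)
    _ ≤ (G.neighborSet u \ {v}).ncard + 1 := Set.ncard_insert_le _ _
    _ = deg G u := Set.ncard_sdiff_singleton_add_one h (Set.toFinite _)

variable [DecidableEq V]

lemma edgeForceProb_mem_unitInterval [Finite V] (G : SimpleGraph V) (B : Finset V) (u v : V) :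
    edgeForceProb G B u v ∈ unitInterval := by
  unfold edgeForceProb
  split_ifs with h
  · exact ⟨by positivity,
      div_le_one_of_le₀ (by exact_mod_cast closedDegIn_le_deg h.1 h.2.2) (by positivity)⟩
  · exact unitInterval.zero_mem

variable [Fintype V]

lemma sum_seqProbAux_eq_finishProb (G : SimpleGraph V) (ℓ : ℕ) (hist : List (Finset V))
    (B : Finset V) :
    (∑ traj : Fin ℓ → Finset V, if univ ⊆ (B :: List.ofFn traj).getLastD ∅ then
      seqProbAux (stdStep G) (hist ++ [B]) (List.ofFn traj) else 0) =
      finishProb (edgeForceProb G) ℓ B := by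
  induction ℓ generalizing hist B with
  | zero => simp [finishProb, seqProbAux, univ_subset_iff]
  | succ ℓ ih =>
    rw [← (Fin.consEquiv fun _ => Finset V).sum_comp, Fintype.sum_prod_type, finishProb,
      subsetExp_blueProb]
    refine sum_congr rfl fun B' _ => ?_
    rw [← ih (hist ++ [B]) B', mul_sum]
    refine sum_congr rfl fun traj _ => ?_
    simp [seqProbAux, stdStep]

lemma probAllBlue_eq_finishProb (G : SimpleGraph V) (S : Finset V) (ℓ : ℕ) :
    probAllBlue G S ℓ = finishProb (edgeForceProb G) ℓ S := by
  rw [← sum_seqProbAux_eq_finishProb G ℓ [] S]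
  simp only [probAllBlue, probForced, trajEventProb, List.nil_append]
  congr!

lemma probAllBlue_mem_unitInterval (G : SimpleGraph V) (S : Finset V) (ℓ : ℕ) :
    probAllBlue G S ℓ ∈ unitInterval :=
  probAllBlue_eq_finishProb G S ℓ ▸
    finishProb_mem_unitInterval (edgeForceProb_mem_unitInterval G) ℓ S

end StandardProcess

section CappedProcess

variable {V : Type*} [DecidableEq V] {d p : ℝ} {H S T : Finset (Sym2 V)} {B B' : Finset V}
  {u v w x y : V}

/-- The closed degree `|N[u] ∩ B|` in the graph on `V` with edge set `S`. -/
def closedDegInEdges (S : Finset (Sym2 V)) (B : Finset V) (u : V) : ℕ :=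
  #{x ∈ B | u = x ∨ s(u, x) ∈ S}

/-- The probability with which a blue vertex `u` forces a given neighbour in the graph with edge
set `S`, when its degree is replaced by the constant `d`; the cap at `1` keeps it a probability
for vertices whose degree is below `d`. -/
noncomputable def cappedRate (d : ℝ) (S : Finset (Sym2 V)) (B : Finset V) (u : V) : ℝ :=
  min 1 (closedDegInEdges S B u / d)

/-- The transition rule of the forcing process on the graph with edge set `S` in which all degrees
are replaced by `d`. It dominates probabilistic zero forcing when all degrees are at least `d`. -/
noncomputable def cappedForceProb (d : ℝ) (S : Finset (Sym2 V)) (B : Finset V) (u v : V) : ℝ :=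
  if s(u, v) ∈ S then cappedRate d S B u else 0

/-- The number of ordered pairs of blue vertices that are equal or adjacent, i.e. the sum of
`|N[u] ∩ B|` over the blue vertices `u`, in the graph with edge set `S`. -/
noncomputable def potential (S : Finset (Sym2 V)) (B : Finset V) : ℝ :=
  ∑ u ∈ B, (closedDegInEdges S B u : ℝ)

/-- The sum of the capped forcing rates of all blue vertices. -/
noncomputable def totalRate (d : ℝ) (S : Finset (Sym2 V)) (B : Finset V) : ℝ :=
  ∑ u ∈ B, cappedRate d S B u

lemma cappedRate_mem_unitInterval (hd : 0 ≤ d) (S : Finset (Sym2 V)) (B : Finset V) (u : V) :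
    cappedRate d S B u ∈ unitInterval :=
  ⟨le_min zero_le_one (by positivity), min_le_left _ _⟩

lemma cappedForceProb_mem_unitInterval (hd : 0 ≤ d) (S : Finset (Sym2 V)) (B : Finset V)
    (u v : V) : cappedForceProb d S B u v ∈ unitInterval := by
  unfold cappedForceProb
  split_ifs
  exacts [cappedRate_mem_unitInterval hd S B u, unitInterval.zero_mem]

lemma monotone_cappedForceProb (hd : 0 ≤ d) (S : Finset (Sym2 V)) :
    Monotone (cappedForceProb d S) := by
  intro B B' h u v
  have closedDeg_le : closedDegInEdges S B u ≤ closedDegInEdges S B' u :=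
    card_le_card (filter_subset_filter _ h)
  unfold cappedForceProb cappedRate
  split_ifs
  · gcongr
  · exact le_rfl

lemma totalRate_nonneg (hd : 0 ≤ d) (S : Finset (Sym2 V)) (B : Finset V) :
    0 ≤ totalRate d S B :=
  sum_nonneg fun u _ => (cappedRate_mem_unitInterval hd S B u).1

lemma totalRate_le_potential_div (d : ℝ) (S : Finset (Sym2 V)) (B : Finset V) :
    totalRate d S B ≤ potential S B / d := by
  rw [totalRate, potential, sum_div]
  exact sum_le_sum fun u _ => min_le_right _ _

lemma card_le_potential (S : Finset (Sym2 V)) (B : Finset V) : (#B : ℝ) ≤ potential S B := by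
  rw [potential, card_eq_sum_ones]
  push_cast
  refine sum_le_sum fun u hu => ?_
  exact_mod_cast card_pos.2 ⟨u, mem_filter.2 ⟨hu, Or.inl rfl⟩⟩

lemma potential_nonneg (S : Finset (Sym2 V)) (B : Finset V) : 0 ≤ potential S B :=
  sum_nonneg fun _ _ => Nat.cast_nonneg _

lemma mk_mem_union_iff_of_notMem (hH : H ⊆ B.sym2) (hw : w ∉ B) :
    s(u, w) ∈ H ∪ S ↔ s(u, w) ∈ S := by
  rw [mem_union, or_iff_right fun h => hw (mk_mem_sym2_iff.1 (hH h)).2]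

lemma mk_mem_union_iff_of_mem (hS : Disjoint S B.sym2) (hu : u ∈ B) (hw : w ∈ B) :
    s(u, w) ∈ H ∪ S ↔ s(u, w) ∈ H := by
  rw [mem_union, or_iff_left fun h => disjoint_left.1 hS h (mk_mem_sym2_iff.2 ⟨hu, hw⟩)]

lemma closedDegInEdges_union (hS : Disjoint S B.sym2) (hu : u ∈ B) :
    closedDegInEdges (H ∪ S) B u = closedDegInEdges H B u := by
  unfold closedDegInEdges
  congr 1
  exact filter_congr fun x hx => or_congr_right (mk_mem_union_iff_of_mem hS hu hx)

lemma cappedRate_union (hS : Disjoint S B.sym2) (hu : u ∈ B) :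
    cappedRate d (H ∪ S) B u = cappedRate d H B u := by
  rw [cappedRate, closedDegInEdges_union hS hu, cappedRate]

lemma potential_union (hS : Disjoint S B.sym2) : potential (H ∪ S) B = potential H B :=
  sum_congr rfl fun u hu => by rw [closedDegInEdges_union hS hu]

section Domination

lemma closedDegIn_eq_closedDegInEdges (G : SimpleGraph V) [Fintype G.edgeSet] (B : Finset V)
    (u : V) : closedDegIn G B u = closedDegInEdges G.edgeFinset B u := by
  rw [closedDegIn, closedDegInEdges, ← Set.ncard_coe_finset]
  congr 1
  ext x
  simp only [Set.mem_inter_iff, Set.mem_insert_iff, SimpleGraph.mem_neighborSet, mem_coe,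
    coe_filter, Set.mem_ofPred_eq, SimpleGraph.mem_edgeFinset, SimpleGraph.mem_edgeSet,
    eq_comm (a := x), and_comm]

variable {G : SimpleGraph V} [Fintype G.edgeSet]

lemma edgeForceProb_le_cappedForceProb [Finite V] (hd : 0 < d) (hdeg : ∀ u, d ≤ deg G u)
    (B : Finset V) (u v : V) :
    edgeForceProb G B u v ≤ cappedForceProb d G.edgeFinset B u v := by
  by_cases h : G.Adj u v ∧ u ∈ B ∧ v ∉ B
  · rw [cappedForceProb, if_pos (SimpleGraph.mem_edgeFinset.2 h.1)]
    refine le_min (edgeForceProb_mem_unitInterval G B u v).2 ?_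
    rw [edgeForceProb, if_pos h, closedDegIn_eq_closedDegInEdges]
    exact div_le_div_of_nonneg_left (Nat.cast_nonneg _) hd (hdeg u)
  · rw [edgeForceProb, if_neg h]
    exact (cappedForceProb_mem_unitInterval hd.le _ B u v).1

lemma probAllBlue_le_finishProb_cappedForceProb [Fintype V] (hd : 0 < d)
    (hdeg : ∀ u, d ≤ deg G u) (B : Finset V) (ℓ : ℕ) :
    probAllBlue G B ℓ ≤ finishProb (cappedForceProb d G.edgeFinset) ℓ B := by
  rw [probAllBlue_eq_finishProb]
  exact finishProb_le_finishProb (edgeForceProb_mem_unitInterval G)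
    (cappedForceProb_mem_unitInterval hd.le _) (edgeForceProb_le_cappedForceProb hd hdeg)
    (monotone_cappedForceProb hd.le _) ℓ B

end Domination

section DeferredExposure

/-- The probability that no vertex of `B` forces a vertex outside `B'` along the potential edge
`e`, given that `e` is present, when `H` is the set of edges inside `B`. -/
noncomputable def missProb [Fintype V] (d : ℝ) (H : Finset (Sym2 V)) (B B' : Finset V)
    (e : Sym2 V) : ℝ :=
  ∏ w ∈ B'ᶜ, ∏ u ∈ B, if e = s(u, w) then 1 - cappedRate d H B u else 1

variable [Fintype V] {ρ : Sym2 V → ℝ}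

lemma missProb_mem_unitInterval (hd : 0 ≤ d) (H : Finset (Sym2 V)) (B B' : Finset V)
    (e : Sym2 V) : missProb d H B B' e ∈ unitInterval := by
  refine unitInterval.prod_mem fun w _ => unitInterval.prod_mem fun u _ => ?_
  split_ifs
  exacts [Set.Icc.mem_iff_one_sub_mem.1 (cappedRate_mem_unitInterval hd H B u),
    unitInterval.one_mem]

lemma stepOfQ_cappedForceProb_union (hBB' : B ⊆ B') (hH : H ⊆ B'.sym2)
    (hS : Disjoint S B'.sym2) :
    stepOfQ (cappedForceProb d (H ∪ S) B) B B' =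
      (∏ w ∈ B' \ B, (1 - ∏ u ∈ B, (1 - cappedForceProb d H B u w))) *
        ∏ e ∈ S, missProb d H B B' e := by
  have hSB : Disjoint S B.sym2 := hS.mono_right (sym2_mono hBB')
  rw [stepOfQ, if_pos hBB']
  congr 1
  · refine prod_congr rfl fun w hw => congrArg (1 - ·) (prod_congr rfl fun u hu => ?_)
    simp only [cappedForceProb, cappedRate_union hSB hu,
      mk_mem_union_iff_of_mem hS (hBB' hu) (mem_sdiff.1 hw).1]
  · simp only [missProb]
    rw [Finset.prod_comm (s := S)]
    refine prod_congr rfl fun w hw => ?_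
    rw [Finset.prod_comm]
    refine prod_congr rfl fun u hu => ?_
    rw [prod_ite_eq', cappedForceProb, cappedRate_union hSB hu]
    simp only [mk_mem_union_iff_of_notMem hH (mem_compl.1 hw)]
    split_ifs <;> simp

/- Exposing the edges inside `B'` fixes the rates, and the remaining edges enter the transition
probability only through a product over them. -/
lemma subsetExp_stepOfQ_mul_nonneg {f : Finset (Sym2 V) → ℝ} (hd : 0 ≤ d) (hp : p < 1)
    (hBB' : B ⊆ B') (hH : H ⊆ B.sym2) (hρ : ∀ e, ρ e ∈ Set.Icc 0 p)
    (hf : ∀ H' ρ', H' ⊆ B'.sym2 → (∀ e, ρ' e ∈ Set.Icc 0 p) →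
      0 ≤ subsetExp (T \ B'.sym2) ρ' fun S => f (H' ∪ S)) :
    0 ≤ subsetExp (T \ B.sym2) ρ fun S =>
      stepOfQ (cappedForceProb d (H ∪ S) B) B B' * f (H ∪ S) := by
  have hsym2 : B.sym2 ⊆ B'.sym2 := sym2_mono hBB'
  have expose_inside : T \ B.sym2 = (T \ B.sym2) ∩ B'.sym2 ∪ T \ B'.sym2 := by
    conv_lhs => rw [← sdiff_union_inter (T \ B.sym2) B'.sym2, sdiff_sdiff_left, sup_eq_union,
      union_eq_right.2 hsym2, union_comm]
  rw [expose_inside, subsetExp_union (disjoint_sdiff.mono_left inter_subset_right)]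
  refine subsetExp_nonneg (fun e => ⟨(hρ e).1, (hρ e).2.trans hp.le⟩) fun S₁ hS₁ => ?_
  have hH' : H ∪ S₁ ⊆ B'.sym2 := union_subset (hH.trans hsym2) (hS₁.trans inter_subset_right)
  set c := ∏ w ∈ B' \ B, (1 - ∏ u ∈ B, (1 - cappedForceProb d (H ∪ S₁) B u w))
  have hc : 0 ≤ c := prod_nonneg fun w _ => sub_nonneg.2
    (unitInterval.prod_mem fun u _ => Set.Icc.mem_iff_one_sub_mem.1
      (cappedForceProb_mem_unitInterval hd _ B u w)).2
  have step_factors : ∀ S₂ ⊆ T \ B'.sym2,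
      stepOfQ (cappedForceProb d (H ∪ (S₁ ∪ S₂)) B) B B' * f (H ∪ (S₁ ∪ S₂)) =
        c * ((∏ e ∈ S₂, missProb d (H ∪ S₁) B B' e) * f (H ∪ S₁ ∪ S₂)) := fun S₂ hS₂ => by
    rw [← union_assoc, stepOfQ_cappedForceProb_union hBB' hH' (sdiff_disjoint.mono_left hS₂),
      mul_assoc]
  rw [subsetExp_congr step_factors, subsetExp_const_mul]
  refine mul_nonneg hc (subsetExp_prod_mul_nonneg (fun e => ⟨(hρ e).1, (hρ e).2.trans_lt hp⟩)
    (missProb_mem_unitInterval hd _ B B') fun ρ' hρ' => ?_)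
  exact hf _ ρ' hH' fun e => ⟨(hρ' e).1, (hρ' e).2.trans (hρ e).2⟩

lemma subsetExp_round_nonneg {f : Finset (Sym2 V) → Finset V → ℝ} (hd : 0 ≤ d) (hp : p < 1)
    (hH : H ⊆ B.sym2) (hρ : ∀ e, ρ e ∈ Set.Icc 0 p)
    (hf : ∀ B' H' ρ', H' ⊆ B'.sym2 → (∀ e, ρ' e ∈ Set.Icc 0 p) →
      0 ≤ subsetExp (T \ B'.sym2) ρ' fun S => f (H' ∪ S) B') :
    0 ≤ subsetExp (T \ B.sym2) ρ fun S =>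
      subsetExp univ (blueProb (cappedForceProb d (H ∪ S) B) B) (f (H ∪ S)) := by
  simp only [subsetExp_blueProb]
  rw [subsetExp_sum]
  refine sum_nonneg fun B' _ => ?_
  by_cases hBB' : B ⊆ B'
  · exact subsetExp_stepOfQ_mul_nonneg (f := (f · B')) hd hp hBB' hH hρ (hf B')
  · simp only [stepOfQ_of_not_subset _ hBB', zero_mul, subsetExp_const, le_refl]

end DeferredExposure

section Growth

/-- The probability that `x` and `y` are equal or adjacent in the graph with edge set `S` and both
blue after one round of the capped process from the blue set `B`. It bounds the contribution of
`(x, y)` to the expected potential after that round. -/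
noncomputable def pairBlueProb (d : ℝ) (S : Finset (Sym2 V)) (B : Finset V) (x y : V) : ℝ :=
  if x = y ∨ s(x, y) ∈ S then ∏ z ∈ {x, y}, blueProb (cappedForceProb d S B) B z else 0

lemma pairBlueProb_comm (d : ℝ) (S : Finset (Sym2 V)) (B : Finset V) (x y : V) :
    pairBlueProb d S B x y = pairBlueProb d S B y x := by
  simp only [pairBlueProb, pair_comm x y, Sym2.eq_swap (a := x), eq_comm (a := x)]

lemma blueProb_cappedForceProb_union_le (hd : 0 ≤ d) (hH : H ⊆ B.sym2) (hS : Disjoint S B.sym2)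
    (hw : w ∉ B) :
    blueProb (cappedForceProb d (H ∪ S) B) B w ≤
      ∑ u ∈ B, cappedRate d H B u * if s(u, w) ∈ S then 1 else 0 := by
  refine (blueProb_le_sum (cappedForceProb_mem_unitInterval hd _ B) hw).trans_eq ?_
  refine sum_congr rfl fun u hu => ?_
  rw [cappedForceProb, cappedRate_union hS hu, mul_ite, mul_one, mul_zero]
  simp only [mk_mem_union_iff_of_notMem hH hw]

section PairBounds

variable {ρ : Sym2 V → ℝ}

lemma subsetExp_pairBlueProb_of_mem (hT : Disjoint T B.sym2) (hx : x ∈ B) (hy : y ∈ B) :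
    subsetExp T ρ (fun S => pairBlueProb d (H ∪ S) B x y) =
      if x = y ∨ s(x, y) ∈ H then 1 else 0 := by
  rw [← subsetExp_const T ρ (if x = y ∨ s(x, y) ∈ H then 1 else 0)]
  refine subsetExp_congr fun S hS => ?_
  have hz : ∀ z ∈ ({x, y} : Finset V), z ∈ B := by simp [hx, hy]
  rw [pairBlueProb, prod_eq_one fun z h => blueProb_of_mem (hz z h)]
  simp only [mk_mem_union_iff_of_mem (hT.mono_left hS) hx hy]

lemma subsetExp_pairBlueProb_of_mem_of_notMem (hd : 0 ≤ d) (hp : p ≤ 1) (hH : H ⊆ B.sym2)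
    (hT : Disjoint T B.sym2) (hρ : ∀ e, ρ e ∈ Set.Icc 0 p) (hx : x ∈ B) (hy : y ∉ B) :
    subsetExp T ρ (fun S => pairBlueProb d (H ∪ S) B x y) ≤
      p ^ 2 * totalRate d H B + p * cappedRate d H B x := by
  have hxy : x ≠ y := fun h => hy (h ▸ hx)
  have rate_nonneg (u : V) : 0 ≤ cappedRate d H B u := (cappedRate_mem_unitInterval hd H B u).1
  have pair_le : ∀ S ⊆ T, pairBlueProb d (H ∪ S) B x y ≤ ∑ u ∈ B, cappedRate d H B u *
      if {s(u, y), s(x, y)} ⊆ S then 1 else 0 := fun S hS => by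
    simp only [pairBlueProb, prod_pair hxy, blueProb_of_mem hx, one_mul, hxy, false_or,
      mk_mem_union_iff_of_notMem hH hy, insert_subset_iff, singleton_subset_iff]
    by_cases h : s(x, y) ∈ S
    · simpa only [h, if_true, and_true] using
        blueProb_cappedForceProb_union_le hd hH (hT.mono_left hS) hy
    · simp [h]
  refine (subsetExp_le_sum_mul_pow_card hρ hp (fun u _ => rate_nonneg u) pair_le).trans ?_
  calc ∑ u ∈ B, cappedRate d H B u * p ^ #{s(u, y), s(x, y)}
      ≤ ∑ u ∈ B, (p ^ 2 * cappedRate d H B u + if u = x then p * cappedRate d H B x else 0) := by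
        refine sum_le_sum fun u _ => ?_
        rcases eq_or_ne u x with rfl | hux
        · rw [pair_eq_singleton, card_singleton, pow_one, if_pos rfl, mul_comm p]
          linarith [mul_nonneg (sq_nonneg p) (rate_nonneg u)]
        · rw [card_pair (by simp [hux, hxy.symm]), if_neg hux, add_zero, mul_comm]
    _ = p ^ 2 * totalRate d H B + p * cappedRate d H B x := by
        rw [sum_add_distrib, ← mul_sum, sum_ite_eq', if_pos hx, totalRate]

lemma subsetExp_pairBlueProb_self_le (hd : 0 ≤ d) (hp : p ≤ 1) (hH : H ⊆ B.sym2)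
    (hT : Disjoint T B.sym2) (hρ : ∀ e, ρ e ∈ Set.Icc 0 p) (hx : x ∉ B) :
    subsetExp T ρ (fun S => pairBlueProb d (H ∪ S) B x x) ≤ p * totalRate d H B := by
  have pair_le : ∀ S ⊆ T, pairBlueProb d (H ∪ S) B x x ≤
      ∑ u ∈ B, cappedRate d H B u * if {s(u, x)} ⊆ S then 1 else 0 := fun S hS => by
    simpa [pairBlueProb] using blueProb_cappedForceProb_union_le hd hH (hT.mono_left hS) hx
  refine (subsetExp_le_sum_mul_pow_card hρ hp
    (fun u _ => (cappedRate_mem_unitInterval hd H B u).1) pair_le).trans_eq ?_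
  simp only [card_singleton, pow_one, totalRate, mul_sum, mul_comm]

lemma card_triple_of_notMem {u' : V} (hu : u ∈ B) (hu' : u' ∈ B) (hx : x ∉ B) (hy : y ∉ B)
    (hxy : x ≠ y) : #{s(u, x), s(u', y), s(x, y)} = 3 := by
  have hux : u ≠ x := fun h => hx (h ▸ hu)
  have huy : u ≠ y := fun h => hy (h ▸ hu)
  have hux' : u' ≠ x := fun h => hx (h ▸ hu')
  exact card_eq_three.2 ⟨_, _, _, by simp [hxy, huy], by simp [hux, huy],
    by simp [hux', hxy.symm], rfl⟩

lemma subsetExp_pairBlueProb_of_notMem (hd : 0 ≤ d) (hp : p ≤ 1) (hH : H ⊆ B.sym2)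
    (hT : Disjoint T B.sym2) (hρ : ∀ e, ρ e ∈ Set.Icc 0 p) (hx : x ∉ B) (hy : y ∉ B)
    (hxy : x ≠ y) :
    subsetExp T ρ (fun S => pairBlueProb d (H ∪ S) B x y) ≤ p ^ 3 * totalRate d H B ^ 2 := by
  have pair_le : ∀ S ⊆ T, pairBlueProb d (H ∪ S) B x y ≤ ∑ i ∈ B ×ˢ B,
      cappedRate d H B i.1 * cappedRate d H B i.2 *
        if {s(i.1, x), s(i.2, y), s(x, y)} ⊆ S then 1 else 0 := fun S hS => by
    have hS' : Disjoint S B.sym2 := hT.mono_left hS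
    simp only [pairBlueProb, prod_pair hxy, hxy, false_or, mk_mem_union_iff_of_notMem hH hy,
      insert_subset_iff, singleton_subset_iff]
    by_cases h : s(x, y) ∈ S
    · simp only [h, if_true, and_true]
      have blue_nonneg (w : V) :=
        (blueProb_mem_unitInterval (cappedForceProb_mem_unitInterval hd (H ∪ S) B) B w).1
      have blue_le_x := blueProb_cappedForceProb_union_le hd hH hS' hx
      refine (mul_le_mul blue_le_x (blueProb_cappedForceProb_union_le hd hH hS' hy)
        (blue_nonneg y) ((blue_nonneg x).trans blue_le_x)).trans_eq ?_
      rw [sum_mul_sum, sum_product]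
      refine sum_congr rfl fun u _ => sum_congr rfl fun u' _ => ?_
      rw [mul_mul_mul_comm, ite_zero_mul_ite_zero, one_mul]
    · simp [h]
  refine (subsetExp_le_sum_mul_pow_card hρ hp (fun i _ => mul_nonneg
    (cappedRate_mem_unitInterval hd H B i.1).1 (cappedRate_mem_unitInterval hd H B i.2).1)
    pair_le).trans_eq ?_
  rw [sq, totalRate, sum_mul_sum, ← sum_product', mul_sum]
  refine sum_congr rfl fun i hi => ?_
  obtain ⟨hu, hu'⟩ := mem_product.1 hi
  rw [card_triple_of_notMem hu hu' hx hy hxy, mul_comm]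

lemma sum_subsetExp_pairBlueProb_inside (hT : Disjoint T B.sym2) :
    ∑ x ∈ B, ∑ y ∈ B, subsetExp T ρ (fun S => pairBlueProb d (H ∪ S) B x y) = potential H B := by
  refine sum_congr rfl fun x hx => ?_
  rw [closedDegInEdges, card_filter, Nat.cast_sum]
  refine sum_congr rfl fun y hy => ?_
  rw [subsetExp_pairBlueProb_of_mem hT hx hy, Nat.cast_ite, Nat.cast_one, Nat.cast_zero]

end PairBounds

variable [Fintype V] {ρ : Sym2 V → ℝ}

lemma potential_eq_sum_univ (S : Finset (Sym2 V)) (B : Finset V) :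
    potential S B = ∑ x, ∑ y, (if x = y ∨ s(x, y) ∈ S then 1 else 0) *
      if {x, y} ⊆ B then 1 else 0 := by
  have inner_sum (x : V) : ∑ y, ((if x = y ∨ s(x, y) ∈ S then 1 else 0) *
      if {x, y} ⊆ B then (1 : ℝ) else 0) = if x ∈ B then (closedDegInEdges S B x : ℝ) else 0 := by
    by_cases hx : x ∈ B
    · rw [closedDegInEdges, if_pos hx, card_filter, Nat.cast_sum, ← sum_subset (subset_univ B)]
      · exact sum_congr rfl fun y hy => by simp [insert_subset_iff, hx, hy]
      · exact fun y _ hy => by simp [insert_subset_iff, hy]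
    · simp [insert_subset_iff, hx]
  simp only [inner_sum, sum_ite_mem, univ_inter, potential]

lemma subsetExp_potential_le (hd : 0 ≤ d) (S : Finset (Sym2 V)) (B : Finset V) :
    subsetExp univ (blueProb (cappedForceProb d S B) B) (potential S) ≤
      ∑ x, ∑ y, pairBlueProb d S B x y := by
  rw [funext (potential_eq_sum_univ S), subsetExp_sum]
  refine sum_le_sum fun x _ => ?_
  rw [subsetExp_sum]
  refine sum_le_sum fun y _ => ?_
  rw [subsetExp_const_mul, pairBlueProb, ite_mul, one_mul, zero_mul]
  split_ifs
  · exact subsetExp_superset_le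
      (blueProb_mem_unitInterval (cappedForceProb_mem_unitInterval hd S B) B) _
  · exact le_rfl

lemma sum_subsetExp_pairBlueProb_cross_le (hd : 0 ≤ d) (hp : p ∈ unitInterval)
    (hH : H ⊆ B.sym2) (hT : Disjoint T B.sym2) (hρ : ∀ e, ρ e ∈ Set.Icc 0 p) :
    ∑ x ∈ B, ∑ y ∈ Bᶜ, subsetExp T ρ (fun S => pairBlueProb d (H ∪ S) B x y) ≤
      Fintype.card V * (p ^ 2 * (#B * totalRate d H B) + p * totalRate d H B) := by
  have rate_nonneg := totalRate_nonneg hd H B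
  have hp₀ : 0 ≤ p := hp.1
  calc ∑ x ∈ B, ∑ y ∈ Bᶜ, subsetExp T ρ (fun S => pairBlueProb d (H ∪ S) B x y)
      ≤ ∑ x ∈ B, ∑ _y ∈ Bᶜ, (p ^ 2 * totalRate d H B + p * cappedRate d H B x) :=
        sum_le_sum fun x hx => sum_le_sum fun y hy =>
          subsetExp_pairBlueProb_of_mem_of_notMem hd hp.2 hH hT hρ hx (mem_compl.1 hy)
    _ = #Bᶜ * (p ^ 2 * (#B * totalRate d H B) + p * totalRate d H B) := by
        simp only [totalRate, sum_const, nsmul_eq_mul, ← mul_sum, sum_add_distrib]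
        ring
    _ ≤ _ := by
        gcongr
        exact card_le_univ _

lemma sum_subsetExp_pairBlueProb_outside_le (hd : 0 ≤ d) (hp : p ∈ unitInterval)
    (hH : H ⊆ B.sym2) (hT : Disjoint T B.sym2) (hρ : ∀ e, ρ e ∈ Set.Icc 0 p) :
    ∑ x ∈ Bᶜ, ∑ y ∈ Bᶜ, subsetExp T ρ (fun S => pairBlueProb d (H ∪ S) B x y) ≤
      Fintype.card V * (p * totalRate d H B) +
        Fintype.card V ^ 2 * (p ^ 3 * totalRate d H B ^ 2) := by
  have rate_nonneg := totalRate_nonneg hd H B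
  have hp₀ : 0 ≤ p := hp.1
  have pair_le : ∀ x ∈ Bᶜ, ∀ y ∈ Bᶜ, subsetExp T ρ (fun S => pairBlueProb d (H ∪ S) B x y) ≤
      (if x = y then p * totalRate d H B else 0) + p ^ 3 * totalRate d H B ^ 2 := by
    intro x hx y hy
    rcases eq_or_ne x y with rfl | hxy
    · rw [if_pos rfl]
      exact (subsetExp_pairBlueProb_self_le hd hp.2 hH hT hρ (mem_compl.1 hx)).trans
        (le_add_of_nonneg_right (by positivity))
    · rw [if_neg hxy, zero_add]
      exact subsetExp_pairBlueProb_of_notMem hd hp.2 hH hT hρ (mem_compl.1 hx)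
        (mem_compl.1 hy) hxy
  have card_compl_le : (#Bᶜ : ℝ) ≤ Fintype.card V := by exact_mod_cast card_le_univ _
  calc ∑ x ∈ Bᶜ, ∑ y ∈ Bᶜ, subsetExp T ρ (fun S => pairBlueProb d (H ∪ S) B x y)
      ≤ ∑ x ∈ Bᶜ, ∑ y ∈ Bᶜ,
          ((if x = y then p * totalRate d H B else 0) + p ^ 3 * totalRate d H B ^ 2) :=
        sum_le_sum fun x hx => sum_le_sum (pair_le x hx)
    _ = #Bᶜ * (p * totalRate d H B) + #Bᶜ ^ 2 * (p ^ 3 * totalRate d H B ^ 2) := by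
        simp only [sum_add_distrib, sum_ite_eq, sum_const, nsmul_eq_mul, sum_ite_mem, inter_self]
        ring
    _ ≤ _ := by gcongr

lemma subsetExp_round_potential_le (hd : 0 ≤ d) (hp : p ∈ unitInterval) (hH : H ⊆ B.sym2)
    (hT : Disjoint T B.sym2) (hρ : ∀ e, ρ e ∈ Set.Icc 0 p) :
    subsetExp T ρ (fun S =>
        subsetExp univ (blueProb (cappedForceProb d (H ∪ S) B) B) (potential (H ∪ S))) ≤
      potential H B + 3 * (Fintype.card V * p * totalRate d H B) +
        2 * (p * #B) * (Fintype.card V * p * totalRate d H B) +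
        p * (Fintype.card V * p * totalRate d H B) ^ 2 := by
  have cross_le := sum_subsetExp_pairBlueProb_cross_le hd hp hH hT hρ
  have outside_le := sum_subsetExp_pairBlueProb_outside_le hd hp hH hT hρ
  have hρ' (e : Sym2 V) : ρ e ∈ unitInterval := ⟨(hρ e).1, (hρ e).2.trans hp.2⟩
  calc subsetExp T ρ (fun S =>
        subsetExp univ (blueProb (cappedForceProb d (H ∪ S) B) B) (potential (H ∪ S)))
      ≤ ∑ x, ∑ y, subsetExp T ρ (fun S => pairBlueProb d (H ∪ S) B x y) := by
        refine (subsetExp_mono hρ' fun S _ => subsetExp_potential_le hd (H ∪ S) B).trans_eq ?_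
        simp only [subsetExp_sum]
    _ = potential H B +
          2 * ∑ x ∈ B, ∑ y ∈ Bᶜ, subsetExp T ρ (fun S => pairBlueProb d (H ∪ S) B x y) +
          ∑ x ∈ Bᶜ, ∑ y ∈ Bᶜ, subsetExp T ρ (fun S => pairBlueProb d (H ∪ S) B x y) := by
        have cross_comm :
            ∑ x ∈ Bᶜ, ∑ y ∈ B, subsetExp T ρ (fun S => pairBlueProb d (H ∪ S) B x y) =
              ∑ x ∈ B, ∑ y ∈ Bᶜ, subsetExp T ρ (fun S => pairBlueProb d (H ∪ S) B x y) := by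
          rw [Finset.sum_comm]
          simp only [pairBlueProb_comm]
        have split_sum (f : V → ℝ) : ∑ x, f x = ∑ x ∈ B, f x + ∑ x ∈ Bᶜ, f x :=
          (sum_add_sum_compl B f).symm
        rw [← sum_subsetExp_pairBlueProb_inside (d := d) (ρ := ρ) hT]
        simp only [split_sum, sum_add_distrib, cross_comm]
        ring
    _ ≤ _ := by linarith

variable {κ η γ M : ℝ}

lemma subsetExp_round_potential_le_mul (hd : 0 < d) (hp : p ∈ unitInterval) (hκ : 0 ≤ κ)
    (hNp : Fintype.card V * p ≤ κ * d) (hη : p * M ≤ η)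
    (hγ : 1 + 3 * κ + (2 * κ + κ ^ 2) * η ≤ γ) (hH : H ⊆ B.sym2) (hT : Disjoint T B.sym2)
    (hρ : ∀ e, ρ e ∈ Set.Icc 0 p) (hHM : potential H B ≤ M) :
    subsetExp T ρ (fun S =>
        subsetExp univ (blueProb (cappedForceProb d (H ∪ S) B) B) (potential (H ∪ S))) ≤
      γ * potential H B := by
  refine (subsetExp_round_potential_le hd.le hp hH hT hρ).trans ?_
  have hp₀ : 0 ≤ p := hp.1
  have card_le := card_le_potential H B
  have rate_nonneg := totalRate_nonneg hd.le H B
  have rate_le := totalRate_le_potential_div d H B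
  have pot_nonneg := potential_nonneg H B
  set X := potential H B
  set R := Fintype.card V * p * totalRate d H B
  have hR₀ : 0 ≤ R := by positivity
  have hR : R ≤ κ * X := by
    calc R ≤ (κ * d) * (X / d) := mul_le_mul hNp rate_le rate_nonneg (by positivity)
      _ = κ * X := by field_simp
  have hpX : p * X ≤ η := (mul_le_mul_of_nonneg_left hHM hp₀).trans hη
  have cross_le : p * #B * R ≤ η * (κ * X) :=
    mul_le_mul ((mul_le_mul_of_nonneg_left card_le hp₀).trans hpX) hR hR₀
      ((mul_nonneg hp₀ pot_nonneg).trans hpX)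
  have outside_le : p * R ^ 2 ≤ κ ^ 2 * η * X := by
    calc p * R ^ 2 ≤ p * (κ * X) ^ 2 := by gcongr
      _ = κ ^ 2 * X * (p * X) := by ring
      _ ≤ κ ^ 2 * X * η := by gcongr
      _ = κ ^ 2 * η * X := by ring
  calc X + 3 * R + 2 * (p * #B) * R + p * R ^ 2
      ≤ (1 + 3 * κ + (2 * κ + κ ^ 2) * η) * X := by linarith
    _ ≤ γ * X := mul_le_mul_of_nonneg_right hγ pot_nonneg

lemma finishProb_zero_le (hM : 0 < M) (hMN : M ≤ Fintype.card V)
    (q : Finset V → V → V → ℝ) (H : Finset (Sym2 V)) (B : Finset V) :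
    finishProb q 0 B ≤ potential H B / M := by
  unfold finishProb
  split_ifs with h
  · rw [one_le_div hM]
    calc M ≤ Fintype.card V := hMN
      _ = #B := by rw [h, card_univ]
      _ ≤ potential H B := card_le_potential H B
  · exact div_nonneg (potential_nonneg H B) hM.le

/- The bound is over the edges outside `B` as well as over the process, with arbitrary edge
weights at most `p`: this is what survives conditioning on the outcome of a round. -/
lemma subsetExp_finishProb_le (hd : 0 < d) (hp : p ∈ Set.Ico 0 1) (hκ : 0 ≤ κ)
    (hNp : Fintype.card V * p ≤ κ * d) (hη : p * M ≤ η)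
    (hγ : 1 + 3 * κ + (2 * κ + κ ^ 2) * η ≤ γ) (hM : 0 < M) (hMN : M ≤ Fintype.card V)
    (T : Finset (Sym2 V)) (ℓ : ℕ) (hH : H ⊆ B.sym2) (hρ : ∀ e, ρ e ∈ Set.Icc 0 p) :
    subsetExp (T \ B.sym2) ρ (fun S => finishProb (cappedForceProb d (H ∪ S)) ℓ B) ≤
      γ ^ ℓ / M * potential H B := by
  induction ℓ generalizing B H ρ with
  | zero =>
    refine subsetExp_le_of_le (fun e => ⟨(hρ e).1, (hρ e).2.trans hp.2.le⟩) fun S _ => ?_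
    rw [pow_zero, one_div_mul_eq_div]
    exact finishProb_zero_le hM hMN _ H B
  | succ ℓ ih =>
    have hη₀ : 0 ≤ η := (mul_nonneg hp.1 hM.le).trans hη
    have hγ₁ : 1 ≤ γ := le_trans (by linarith [show 0 ≤ (2 * κ + κ ^ 2) * η by positivity]) hγ
    rcases le_or_gt (potential H B) M with hHM | hHM
    · have round_gap : 0 ≤ subsetExp (T \ B.sym2) ρ fun S =>
          subsetExp univ (blueProb (cappedForceProb d (H ∪ S) B) B) fun B' =>
            γ ^ ℓ / M * potential (H ∪ S) B' - finishProb (cappedForceProb d (H ∪ S)) ℓ B' := by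
        refine subsetExp_round_nonneg (f := fun S B' =>
          γ ^ ℓ / M * potential S B' - finishProb (cappedForceProb d S) ℓ B') hd.le hp.2 hH hρ
          fun B' H' ρ' hH' hρ' => ?_
        rw [subsetExp_sub, subsetExp_congr fun S hS => by
          rw [potential_union (sdiff_disjoint.mono_left hS)], subsetExp_const]
        exact sub_nonneg.2 (ih hH' hρ')
      simp only [subsetExp_sub, subsetExp_const_mul, sub_nonneg] at round_gap
      refine round_gap.trans ?_
      rw [pow_succ, mul_div_right_comm, mul_assoc]
      exact mul_le_mul_of_nonneg_left (subsetExp_round_potential_le_mul hd ⟨hp.1, hp.2.le⟩ hκ hNp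
        hη hγ hH sdiff_disjoint hρ hHM) (by positivity)
    · calc _ ≤ (1 : ℝ) := subsetExp_le_of_le (fun e => ⟨(hρ e).1, (hρ e).2.trans hp.2.le⟩)
            fun S _ => (finishProb_mem_unitInterval
              (cappedForceProb_mem_unitInterval hd.le (H ∪ S)) (ℓ + 1) B).2
        _ ≤ γ ^ (ℓ + 1) * (potential H B / M) :=
            one_le_mul_of_one_le_of_one_le (one_le_pow₀ hγ₁) ((one_le_div hM).2 hHM.le)
        _ = γ ^ (ℓ + 1) / M * potential H B := by ring

end Growth

end CappedProcess

section RandomGraph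

lemma deg_eq_card_filter_edgeFinset {V : Type*} [DecidableEq V] (G : SimpleGraph V)
    [Fintype G.edgeSet] (u : V) : deg G u = #{e ∈ G.edgeFinset | u ∈ e} := by
  have incidenceSet_eq : G.incidenceSet u = ({e ∈ G.edgeFinset | u ∈ e} : Finset (Sym2 V)) := by
    ext e
    simp [SimpleGraph.incidenceSet]
  rw [deg, ← Nat.card_coe_set_eq, ← Nat.card_congr (G.incidenceSetEquivNeighborSet u),
    Nat.card_coe_set_eq, incidenceSet_eq, Set.ncard_coe_finset]

variable {n : ℕ}

lemma card_filter_mem_top_edgeFinset (u : Fin n) :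
    #{e ∈ (⊤ : SimpleGraph (Fin n)).edgeFinset | u ∈ e} = n - 1 := by
  rw [← deg_eq_card_filter_edgeFinset, deg, Set.ncard_eq_toFinset_card',
    ← SimpleGraph.neighborFinset_def, SimpleGraph.card_neighborFinset_eq_degree,
    SimpleGraph.complete_graph_degree, Fintype.card_fin]

lemma sum_erProb_mul (p : ℝ) (f : Finset (Sym2 (Fin n)) → ℝ) :
    ∑ G : SimpleGraph (Fin n), erProb n p G * f G.edgeFinset =
      subsetExp (⊤ : SimpleGraph (Fin n)).edgeFinset (fun _ => p) f := by
  unfold subsetExp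
  refine sum_nbij' (fun G => G.edgeFinset) (fun S => SimpleGraph.fromEdgeSet S)
    (fun G _ => mem_powerset.2 (SimpleGraph.edgeFinset_mono le_top)) (fun _ _ => mem_univ _)
    (fun G _ => by rw [SimpleGraph.coe_edgeFinset, SimpleGraph.fromEdgeSet_edgeSet])
    (fun S hS => ?_) fun G _ => ?_
  · ext e
    simp only [SimpleGraph.mem_edgeFinset, SimpleGraph.edgeSet_fromEdgeSet, Set.mem_sdiff, mem_coe]
    refine and_iff_left_of_imp fun he => ?_
    simpa using mem_powerset.1 hS he
  · rw [prod_const, prod_const, card_sdiff_of_subset (SimpleGraph.edgeFinset_mono le_top),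
      SimpleGraph.card_edgeFinset_top_eq_card_choose_two, Fintype.card_fin, erProb,
      ← Set.ncard_coe_finset, SimpleGraph.coe_edgeFinset]

lemma subsetExp_card_filter_mem_lt_le {p δ : ℝ} (hp : p ∈ unitInterval) (hδ : 0 ≤ δ) (hn : 1 ≤ n)
    (u : Fin n) :
    subsetExp (⊤ : SimpleGraph (Fin n)).edgeFinset (fun _ => p)
        (fun S => if (#{e ∈ S | u ∈ e} : ℝ) < (1 - δ) * ((n - 1) * p) then 1 else 0) ≤
      exp (-(δ ^ 2 / 2 * ((n - 1) * p))) := by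
  have mean_degree :
      ∑ e ∈ (⊤ : SimpleGraph (Fin n)).edgeFinset with u ∈ e, p = (n - 1) * p := by
    rw [sum_const, card_filter_mem_top_edgeFinset, nsmul_eq_mul, Nat.cast_pred hn]
  simpa only [mean_degree] using subsetExp_card_filter_lt_le
    (T := (⊤ : SimpleGraph (Fin n)).edgeFinset) (r := fun _ => p) (fun _ => hp) (u ∈ ·) hδ

lemma probAllBlue_le_sum_add_finishProb {V : Type*} [Fintype V] [DecidableEq V]
    (G : SimpleGraph V) [Fintype G.edgeSet] {d : ℝ} (hd : 0 < d) (B : Finset V) (ℓ : ℕ) :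
    probAllBlue G B ℓ ≤ (∑ u, if (#{e ∈ G.edgeFinset | u ∈ e} : ℝ) < d then 1 else 0) +
      finishProb (cappedForceProb d G.edgeFinset) ℓ B := by
  have indicator_nonneg (u : V) :
      (0 : ℝ) ≤ if (#{e ∈ G.edgeFinset | u ∈ e} : ℝ) < d then 1 else 0 := by positivity
  by_cases h : ∀ u, d ≤ deg G u
  · exact (probAllBlue_le_finishProb_cappedForceProb hd h B ℓ).trans
      (le_add_of_nonneg_left (sum_nonneg fun u _ => indicator_nonneg u))
  · obtain ⟨u, hu⟩ := not_forall.1 h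
    rw [not_le, deg_eq_card_filter_edgeFinset] at hu
    calc probAllBlue G B ℓ ≤ 1 := (probAllBlue_mem_unitInterval G B ℓ).2
      _ = if (#{e ∈ G.edgeFinset | u ∈ e} : ℝ) < d then 1 else 0 := (if_pos hu).symm
      _ ≤ ∑ u, if (#{e ∈ G.edgeFinset | u ∈ e} : ℝ) < d then 1 else 0 :=
          single_le_sum (fun u _ => indicator_nonneg u) (mem_univ u)
      _ ≤ _ := le_add_of_nonneg_right
          (finishProb_mem_unitInterval (cappedForceProb_mem_unitInterval hd.le _) ℓ B).1

lemma erProb_nonneg {p : ℝ} (hp : p ∈ unitInterval) (G : SimpleGraph (Fin n)) :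
    0 ≤ erProb n p G :=
  mul_nonneg (pow_nonneg hp.1 _) (pow_nonneg (sub_nonneg.2 hp.2) _)

lemma prPZFwithin_nonneg {p : ℝ} (hp : p ∈ unitInterval) (v : Fin n) (ℓ : ℕ) :
    0 ≤ prPZFwithin n p v ℓ :=
  sum_nonneg fun G _ => mul_nonneg (erProb_nonneg hp G) (probAllBlue_mem_unitInterval G {v} ℓ).1

lemma prPZFwithin_zero (hn : 2 ≤ n) (p : ℝ) (v : Fin n) : prPZFwithin n p v 0 = 0 := by
  refine sum_eq_zero fun G _ => ?_
  have singleton_ne_univ : {v} ≠ (univ : Finset (Fin n)) := fun h => by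
    have := congrArg card h
    rw [card_singleton, card_fin] at this
    omega
  rw [probAllBlue_eq_finishProb, finishProb, if_neg singleton_ne_univ, mul_zero]

lemma potential_empty_singleton {V : Type*} [DecidableEq V] (v : V) :
    potential ∅ {v} = 1 := by
  simp [potential, closedDegInEdges, filter_singleton]

lemma subsetExp_finishProb_singleton_le {p d κ η γ M : ℝ} (hd : 0 < d) (hp : p ∈ Set.Ico 0 1)
    (hκ : 0 ≤ κ) (hnp : n * p ≤ κ * d) (hη : p * M ≤ η)
    (hγ : 1 + 3 * κ + (2 * κ + κ ^ 2) * η ≤ γ) (hM : 0 < M) (hMn : M ≤ n) (v : Fin n) (ℓ : ℕ) :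
    subsetExp (⊤ : SimpleGraph (Fin n)).edgeFinset (fun _ => p)
      (fun S => finishProb (cappedForceProb d S) ℓ {v}) ≤ γ ^ ℓ / M := by
  have no_edge_inside : (⊤ : SimpleGraph (Fin n)).edgeFinset \ ({v} : Finset (Fin n)).sym2 =
      (⊤ : SimpleGraph (Fin n)).edgeFinset := by
    rw [Finset.sdiff_eq_self_iff_disjoint, sym2_singleton, disjoint_singleton_right]
    simp
  have annealed := subsetExp_finishProb_le (H := ∅) (B := {v}) (ρ := fun _ => p) hd hp hκ
    (by rwa [Fintype.card_fin]) hη hγ hM (by rwa [Fintype.card_fin])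
    (⊤ : SimpleGraph (Fin n)).edgeFinset ℓ (empty_subset _) fun _ => ⟨hp.1, le_rfl⟩
  simpa only [no_edge_inside, empty_union, potential_empty_singleton, mul_one] using annealed

lemma prPZFwithin_le {p δ κ η γ M : ℝ} (hn : 2 ≤ n) (hp : p ∈ Set.Ioo 0 1) (hδ : δ ∈ Set.Ico 0 1)
    (hκ : 0 ≤ κ) (hnp : n * p ≤ κ * ((1 - δ) * ((n - 1) * p))) (hη : p * M ≤ η)
    (hγ : 1 + 3 * κ + (2 * κ + κ ^ 2) * η ≤ γ) (hM : 0 < M) (hMn : M ≤ n) (v : Fin n) (ℓ : ℕ) :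
    prPZFwithin n p v ℓ ≤ n * exp (-(δ ^ 2 / 2 * ((n - 1) * p))) + γ ^ ℓ / M := by
  have hp' : p ∈ unitInterval := ⟨hp.1.le, hp.2.le⟩
  have hn' : (2 : ℝ) ≤ n := by exact_mod_cast hn
  set d : ℝ := (1 - δ) * ((n - 1) * p)
  have hd : 0 < d := mul_pos (sub_pos.2 hδ.2) (mul_pos (by linarith) hp.1)
  calc prPZFwithin n p v ℓ
      ≤ ∑ G : SimpleGraph (Fin n), erProb n p G *
          ((∑ u, if (#{e ∈ G.edgeFinset | u ∈ e} : ℝ) < d then 1 else 0) +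
            finishProb (cappedForceProb d G.edgeFinset) ℓ {v}) :=
        sum_le_sum fun G _ => mul_le_mul_of_nonneg_left
          (probAllBlue_le_sum_add_finishProb G hd {v} ℓ) (erProb_nonneg hp' G)
    _ = (∑ u : Fin n, subsetExp (⊤ : SimpleGraph (Fin n)).edgeFinset (fun _ => p)
          fun S => if (#{e ∈ S | u ∈ e} : ℝ) < d then 1 else 0) +
        subsetExp (⊤ : SimpleGraph (Fin n)).edgeFinset (fun _ => p)
          fun S => finishProb (cappedForceProb d S) ℓ {v} := by
        rw [← subsetExp_sum, ← subsetExp_add, ← sum_erProb_mul]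
    _ ≤ (∑ _u : Fin n, exp (-(δ ^ 2 / 2 * ((n - 1) * p)))) + γ ^ ℓ / M := by
        refine add_le_add (sum_le_sum fun u _ => ?_) ?_
        · exact subsetExp_card_filter_mem_lt_le hp' hδ.1 (by omega) u
        · exact subsetExp_finishProb_singleton_le hd ⟨hp.1.le, hp.2⟩ hκ hnp hη hγ hM hMn v ℓ
    _ = n * exp (-(δ ^ 2 / 2 * ((n - 1) * p))) + γ ^ ℓ / M := by
        rw [sum_const, card_univ, Fintype.card_fin, nsmul_eq_mul]

end RandomGraph

section Asymptotics

variable {n : ℕ}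

lemma prPZFwithin_le_of_slack {p τ γ M : ℝ} (hτ : τ ∈ Set.Ioc 0 1) (hγ : 4 + 4 * τ ≤ γ)
    (hn : 1 + 2 / τ ≤ n) (hp : p ∈ Set.Ioo 0 1) (hη : p * M ≤ τ / 8) (hM : 0 < M) (hMn : M ≤ n)
    (v : Fin n) (ℓ : ℕ) :
    prPZFwithin n p v ℓ ≤ n * exp (-(τ ^ 2 / 32 * ((n - 1) * p))) + γ ^ ℓ / M := by
  obtain ⟨hτ₀, hτ₁⟩ := hτ
  have two_le_mul : 2 ≤ (n - 1) * τ := by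
    rw [← div_le_iff₀ hτ₀]
    linarith
  have hn₂ : 2 ≤ n := by
    have : (2 : ℝ) ≤ n := by nlinarith
    exact_mod_cast this
  have hn₁ : (0 : ℝ) ≤ n - 1 := by nlinarith
  have degree_slack : n * p ≤ (1 + τ) * ((1 - τ / 4) * ((n - 1) * p)) := by
    have factor_ge : 1 + τ / 2 ≤ (1 + τ) * (1 - τ / 4) := by nlinarith
    calc n * p ≤ (1 + τ / 2) * (n - 1) * p :=
          mul_le_mul_of_nonneg_right (by linarith) hp.1.le
      _ ≤ (1 + τ) * (1 - τ / 4) * (n - 1) * p :=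
          mul_le_mul_of_nonneg_right (mul_le_mul_of_nonneg_right factor_ge hn₁) hp.1.le
      _ = (1 + τ) * ((1 - τ / 4) * ((n - 1) * p)) := by ring
  have growth_le : 1 + 3 * (1 + τ) + (2 * (1 + τ) + (1 + τ) ^ 2) * (τ / 8) ≤ γ := by
    have : 2 * (1 + τ) + (1 + τ) ^ 2 ≤ 8 := by nlinarith
    linarith [mul_le_mul_of_nonneg_right this (show 0 ≤ τ / 8 by positivity)]
  rw [show τ ^ 2 / 32 = (τ / 4) ^ 2 / 2 by ring]
  exact prPZFwithin_le hn₂ hp ⟨by positivity, by linarith⟩ (by positivity) degree_slack hη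
    growth_le hM hMn v ℓ

lemma mul_exp_neg_le_one_div {c p : ℝ} (hn : 2 ≤ n) (hcp : 0 ≤ c * p)
    (hlog : Real.log n ≤ c * (n * p)) :
    n * exp (-(4 * c * ((n - 1) * p))) ≤ 1 / n := by
  have hn' : (2 : ℝ) ≤ n := by exact_mod_cast hn
  have hn₀ : (0 : ℝ) < n := by linarith
  calc n * exp (-(4 * c * ((n - 1) * p))) ≤ n * exp (-(2 * Real.log n)) := by
        refine mul_le_mul_of_nonneg_left (exp_le_exp.2 ?_) hn₀.le
        linarith [mul_le_mul_of_nonneg_left hn' hcp]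
    _ = 1 / n := by
        rw [exp_neg, two_mul, exp_add, exp_log hn₀]
        field_simp

lemma four_rpow_pow_ceil_logb_sub_one_le {C s p : ℝ} (hC : 0 ≤ C) (hs : 0 ≤ s)
    (hp : p ∈ Set.Ioc 0 1) :
    ((4 : ℝ) ^ s) ^ (⌈C * logb 4 (1 / p)⌉₊ - 1) ≤ p ^ (-(C * s)) := by
  set x := C * logb 4 (1 / p) with hx_def
  have hx : 0 ≤ x :=
    mul_nonneg hC (logb_nonneg (by norm_num) ((one_le_div hp.1).2 hp.2))
  have ceil_sub_one_le : ((⌈x⌉₊ - 1 : ℕ) : ℝ) ≤ x := by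
    have := Nat.ceil_lt_add_one hx
    rcases Nat.eq_zero_or_pos ⌈x⌉₊ with h | h
    · simpa [h] using hx
    · rw [Nat.cast_pred h]
      linarith
  calc ((4 : ℝ) ^ s) ^ (⌈x⌉₊ - 1) = (4 : ℝ) ^ (s * (⌈x⌉₊ - 1 : ℕ)) := by
        rw [← rpow_natCast, ← rpow_mul (by norm_num)]
    _ ≤ (4 : ℝ) ^ (s * x) := by
        gcongr
        norm_num
    _ = ((4 : ℝ) ^ logb 4 (1 / p)) ^ (C * s) := by
        rw [← rpow_mul (by norm_num), hx_def]
        ring_nf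
    _ = p ^ (-(C * s)) := by
        rw [rpow_logb (by norm_num) (by norm_num) (one_div_pos.2 hp.1), one_div,
          inv_rpow hp.1.le, rpow_neg hp.1.le]

lemma prPZFwithin_ceil_logb_le {p τ s C C' : ℝ} (hτ : τ ∈ Set.Ioc 0 1) (hs : 0 ≤ s)
    (hsτ : 4 + 4 * τ ≤ 4 ^ s) (hC : 0 ≤ C) (hC' : C' ≤ 1) (hp : p ∈ Set.Ioo 0 1)
    (hpC' : p ^ (1 - C') ≤ τ / 8) (hn : 1 + 2 / τ ≤ n)
    (hlog : Real.log n / n / p ≤ τ ^ 2 / 128) (v : Fin n) :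
    prPZFwithin n p v (⌈C * logb 4 (1 / p)⌉₊ - 1) ≤ 1 / n + p ^ (C' - C * s) := by
  have hn₃ : (3 : ℝ) ≤ n := by
    linarith [(le_div_iff₀ hτ.1).2 (by linarith [hτ.2] : 2 * τ ≤ 2)]
  have hn₀ : (0 : ℝ) < n := by linarith
  have log_le : Real.log n ≤ τ ^ 2 / 128 * (n * p) := by
    rwa [div_div, div_le_iff₀ (mul_pos hn₀ hp.1)] at hlog
  have one_le_mul : 1 ≤ n * p := by
    have one_le_log : 1 ≤ Real.log n :=
      (le_log_iff_exp_le hn₀).2 (exp_one_lt_three.le.trans hn₃)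
    have τ_sq_le : τ ^ 2 / 128 ≤ 1 := by nlinarith [hτ.1, hτ.2]
    have np_nonneg : 0 ≤ n * p := mul_nonneg hn₀.le hp.1.le
    linarith [mul_le_of_le_one_left np_nonneg τ_sq_le]
  have hM : 0 < p ^ (-C') := rpow_pos_of_pos hp.1 _
  have hpM : p * p ^ (-C') ≤ τ / 8 := by
    rwa [sub_eq_add_neg, rpow_add hp.1, rpow_one] at hpC'
  have hMn : p ^ (-C') ≤ n := by
    calc p ^ (-C') ≤ p ^ (-1 : ℝ) :=
          rpow_le_rpow_of_exponent_ge hp.1 hp.2.le (neg_le_neg hC')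
      _ = p⁻¹ := rpow_neg_one p
      _ ≤ n := (inv_le_iff_one_le_mul₀ hp.1).2 one_le_mul
  refine (prPZFwithin_le_of_slack hτ hsτ hn hp hpM hM hMn v _).trans (add_le_add ?_ ?_)
  · rw [show τ ^ 2 / 32 = 4 * (τ ^ 2 / 128) by ring]
    have hn₂ : 2 ≤ n := by exact_mod_cast (by linarith : (2 : ℝ) ≤ n)
    exact mul_exp_neg_le_one_div hn₂ (mul_nonneg (by positivity) hp.1.le) log_le
  · rw [div_le_iff₀ hM, ← rpow_add hp.1, sub_add_eq_add_sub, add_neg_cancel, zero_sub]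
    exact four_rpow_pow_ceil_logb_sub_one_le hC hs ⟨hp.1, hp.2.le⟩

lemma eventually_prPZFwithin_ceil_logb_le {p : ℕ → ℝ} (hp : ∀ n, 0 ≤ p n)
    (hlow : Tendsto (fun n : ℕ => Real.log n / n / p n) atTop (nhds 0))
    (hp₀ : Tendsto p atTop (nhds 0)) {C : ℝ} (hC : C ∈ Set.Ioo 0 1) :
    ∃ a : ℝ, 0 < a ∧ ∀ᶠ n in atTop, ∀ v : Fin n,
      prPZFwithin n (p n) v (⌈C * logb 4 (1 / p n)⌉₊ - 1) ≤ 1 / n + p n ^ a := by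
  obtain ⟨hC₀, hC₁⟩ := hC
  set s := 1 + (1 - C) / 4 with hs_def
  set C' := (1 + C) / 2 with hC'_def
  have hs : 1 < s := by linarith
  have four_lt : 4 < (4 : ℝ) ^ s := by
    simpa using rpow_lt_rpow_of_exponent_lt (x := (4 : ℝ)) (by norm_num) hs
  set τ := min 1 (((4 : ℝ) ^ s - 4) / 4)
  have hτ : 0 < τ := lt_min one_pos (by linarith)
  have hsτ : 4 + 4 * τ ≤ 4 ^ s := by linarith [min_le_right 1 (((4 : ℝ) ^ s - 4) / 4)]
  have rpow_tendsto : Tendsto (fun n => p n ^ (1 - C')) atTop (nhds 0) := by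
    have hC'₁ : 0 < 1 - C' := by linarith
    simpa [zero_rpow hC'₁.ne'] using hp₀.rpow_const (Or.inr hC'₁.le)
  refine ⟨C' - C * s, by nlinarith, ?_⟩
  filter_upwards [rpow_tendsto.eventually_le_const (show 0 < τ / 8 by positivity),
    hlow.eventually_le_const (show 0 < τ ^ 2 / 128 by positivity),
    hp₀.eventually_lt_const one_pos, eventually_ge_atTop 2,
    tendsto_natCast_atTop_atTop.eventually_ge_atTop (1 + 2 / τ)] with n hpn hlog hpn₁ hn₂ hn v
  rcases (hp n).eq_or_lt with hpn₀ | hpn₀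
  · rw [← hpn₀, div_zero, logb_zero, mul_zero, Nat.ceil_zero, prPZFwithin_zero hn₂]
    positivity
  · exact prPZFwithin_ceil_logb_le ⟨hτ, min_le_left _ _⟩ (by linarith) hsτ hC₀.le (by linarith)
      ⟨hpn₀, hpn₁⟩ hpn hn hlog v

lemma tendsto_zero_of_le_one_div_log_sq {p : ℕ → ℝ} (hp : ∀ n, 0 ≤ p n)
    (hup : ∀ᶠ n : ℕ in atTop, p n ≤ 1 / Real.log n ^ 2) : Tendsto p atTop (nhds 0) := by
  have log_sq_tendsto : Tendsto (fun n : ℕ => Real.log n ^ 2) atTop atTop :=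
    (tendsto_pow_atTop two_ne_zero).comp (tendsto_log_atTop.comp tendsto_natCast_atTop_atTop)
  refine squeeze_zero' (.of_forall hp) hup ?_
  simpa only [one_div, Pi.inv_def] using log_sq_tendsto.inv_tendsto_atTop

end Asymptotics

end PZF

theorem pzf_lower_bound_sparse_general
    (p : ℕ → ℝ) (hp : ∀ n, 0 ≤ p n ∧ p n ≤ 1)
    (hlow : Tendsto (fun n : ℕ => (Real.log n / n) / p n) atTop (nhds 0))
    (hp₀ : Tendsto p atTop (nhds 0)) (C : ℝ) (hC₀ : 0 < C) (hC₁ : C < 1)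
    (v : (n : ℕ) → Fin (n + 1)) :
    Tendsto
      (fun n => PZF.prPZFwithin (n + 1) (p (n + 1)) (v n)
        (⌈C * Real.logb 4 (1 / p (n + 1))⌉₊ - 1))
      atTop (nhds 0) := by
  obtain ⟨a, ha, bound⟩ :=
    PZF.eventually_prPZFwithin_ceil_logb_le (fun n => (hp n).1) hlow hp₀ ⟨hC₀, hC₁⟩
  have bound_tendsto : Tendsto (fun n : ℕ => 1 / (n : ℝ) + p n ^ a) atTop (nhds 0) := by
    simpa [Real.zero_rpow ha.ne'] using
      tendsto_one_div_atTop_nhds_zero_nat.add (hp₀.rpow_const (Or.inr ha.le))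
  refine squeeze_zero' (.of_forall fun n => PZF.prPZFwithin_nonneg (hp _) _ _) ?_
    (bound_tendsto.comp (tendsto_add_atTop_nat 1))
  filter_upwards [(tendsto_add_atTop_nat 1).eventually bound] with n hn using hn (v n)

/-- If `log n / n ≪ p ≤ 1 / log² n` and `0 < C₁ < C₂ < 1` are constants,
then for each fixed vertex `v` of `G(n,p)`, a.a.s.
`pt_pzf(G(n,p), v) ≥ (C₂ - C₁) log₄ (1/p)`: the probability that all vertices are blue within
`⌈(C₂ - C₁) log₄ (1/p)⌉₊ - 1` rounds tends to `0`. -/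
theorem pzf_lower_bound_sparse
    (p : ℕ → ℝ) (hp : ∀ n, 0 ≤ p n ∧ p n ≤ 1)
    (hlow : Tendsto (fun n : ℕ => (Real.log n / n) / p n) atTop (nhds 0))
    (hup : ∀ᶠ n : ℕ in atTop, p n ≤ 1 / Real.log n ^ 2)
    (C₁ C₂ : ℝ) (hC₁ : 0 < C₁) (hC₁₂ : C₁ < C₂) (hC₂ : C₂ < 1)
    (v : (n : ℕ) → Fin (n + 1)) :
    Tendsto
      (fun n => PZF.prPZFwithin (n + 1) (p (n + 1)) (v n)
        (⌈(C₂ - C₁) * Real.logb 4 (1 / p (n + 1))⌉₊ - 1))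
      atTop (nhds 0) := by
  exact pzf_lower_bound_sparse_general p hp hlow
    (PZF.tendsto_zero_of_le_one_div_log_sq (fun n => (hp n).1) hup) (C₂ - C₁) (by linarith)
    (by linarith) v
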